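/- Fix α ∈ ℝ and set L(θ) := ln(cot(θ/2)) + α and D(θ) := cosθ + sin²θ · L(θ). Define, for x ∈ ℝ³ with polar angle θ ∈ (0,π) and D(θ) ≠ 0, the (−1)-homogeneous vector field u and (−2)-homogeneous function p by u = (1/r)( u_θ(θ) e_θ + u_r(θ) e_r ) and p = p̃(θ)/r², where u_θ(θ) = 4 sinθ (1 − cosθ·L(θ))/D(θ), u_r(θ) = −4 − 8(1 − cosθ·L(θ))/D(θ)², u_φ = 0, and p̃(θ) = 8(−2 + cosθ·L(θ) − sin²θ·L(θ)²)/D(θ)². Then (u,p) solves the stationary Navier–Stokes equations at every such point x. Moreover, on the component where θ is near π, lim_{x∈S², x→S} |u(x)|/ln(dist(x,S)) = −8. -/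

import Mathlib

noncomputable section

open Real Filter MeasureTheory Metric Topology
open scoped ENNReal InnerProductSpace

abbrev V3 := EuclideanSpace ℝ (Fin 3)
abbrev V2 := EuclideanSpace ℝ (Fin 2)

/-- standard basis vector in `ℝ³` -/
def e3 (j : Fin 3) : V3 := EuclideanSpace.single j 1

/-- partial derivative `∂_j f` -/
def pd (j : Fin 3) (f : V3 → ℝ) (x : V3) : ℝ := fderiv ℝ f x (e3 j)

/-- Laplacian on `ℝ³` -/
def lap3 (f : V3 → ℝ) (x : V3) : ℝ := ∑ j, pd j (fun y => pd j f y) x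

/-- stationary Navier–Stokes equations `-Δu + (u·∇)u + ∇p = 0`, `div u = 0` at `x` -/
def NSEq (u : V3 → V3) (p : V3 → ℝ) (x : V3) : Prop :=
  (∀ i, - lap3 (fun z => u z i) x + (∑ j, u x j * pd j (fun z => u z i) x) + pd i p x = 0)
  ∧ (∑ j, pd j (fun z => u z j) x) = 0

/-- stationary Euler equations `(u·∇)u + ∇p = 0`, `div u = 0` at `x` -/
def EulerEq (u : V3 → V3) (p : V3 → ℝ) (x : V3) : Prop :=
  (∀ i, (∑ j, u x j * pd j (fun z => u z i) x) + pd i p x = 0)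
  ∧ (∑ j, pd j (fun z => u z j) x) = 0

/-- south pole -/
def S3 : V3 := EuclideanSpace.single 2 (-1)
/-- north pole -/
def N3 : V3 := EuclideanSpace.single 2 1

/-- the unit sphere `S²` -/
def sphere2 : Set V3 := Metric.sphere (0 : V3) 1

/-- the open cone over a subset of the unit sphere -/
def cone3 (Ω : Set V3) : Set V3 := {x : V3 | x ≠ 0 ∧ (‖x‖⁻¹ • x) ∈ Ω}

/-- `|x'| = √(x₁² + x₂²)` -/
def rho (x : V3) : ℝ := Real.sqrt ((x 0) ^ 2 + (x 1) ^ 2)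

/-- the `x₃`-axis `{x' = 0}` -/
def axis3 : Set V3 := {x : V3 | x 0 = 0 ∧ x 1 = 0}

/-- `Ω_{a,b,R} = {a < x₃ < b, |x'| < R}` -/
def OmegaR (a b R : ℝ) : Set V3 := {x : V3 | a < x 2 ∧ x 2 < b ∧ rho x < R}

/-- build a point of `ℝ³` from `x' ∈ ℝ²` and `x₃ ∈ ℝ` -/
def emb (y : V2) (t : ℝ) : V3 := (EuclideanSpace.equiv (Fin 3) ℝ).symm ![y 0, y 1, t]

/-- spherical component `u_r = u · e_r` -/
def uRc (u : V3 → V3) (x : V3) : ℝ := (u x 0 * x 0 + u x 1 * x 1 + u x 2 * x 2) / ‖x‖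

/-- spherical component `u_θ = u · e_θ` -/
def uTc (u : V3 → V3) (x : V3) : ℝ :=
  (u x 0 * x 0 * x 2 + u x 1 * x 1 * x 2) / (‖x‖ * rho x) - u x 2 * rho x / ‖x‖

/-- spherical component `u_φ = u · e_φ` -/
def uPc (u : V3 → V3) (x : V3) : ℝ := (-(u x 0) * x 1 + u x 1 * x 0) / rho x

/-- axisymmetry on a set: the spherical components are independent of the meridian angle -/
def AxisymOn (u : V3 → V3) (Ω : Set V3) : Prop :=
  ∀ x ∈ Ω, ∀ y ∈ Ω, ‖x‖ = ‖y‖ → x 2 = y 2 →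
    uRc u x = uRc u y ∧ uTc u x = uTc u y ∧ uPc u x = uPc u y

/-- spherical frame vector `e_r` -/
def eRv (x : V3) : V3 := ‖x‖⁻¹ • x

/-- spherical frame vector `e_θ` -/
def eThv (x : V3) : V3 := (EuclideanSpace.equiv (Fin 3) ℝ).symm
  ![x 2 * x 0 / (‖x‖ * rho x), x 2 * x 1 / (‖x‖ * rho x), -(rho x) / ‖x‖]

/-- spherical frame vector `e_φ` -/
def ePhv (x : V3) : V3 := (EuclideanSpace.equiv (Fin 3) ℝ).symm ![-(x 1) / rho x, x 0 / rho x, 0]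

/-- the spherical cap `S² ∩ B_δ(S) \ {S}` -/
def NSCap (δ : ℝ) : Set V3 := (sphere2 ∩ Metric.ball S3 δ) \ {S3}

/-- the spherical cap `S² ∩ B_δ(S)` -/
def NSCapFull (δ : ℝ) : Set V3 := sphere2 ∩ Metric.ball S3 δ

/-- `L(θ) = ln(cot(θ/2)) + α`, written in Cartesian variables. -/
def Lfun (α : ℝ) (x : V3) : ℝ := Real.log ((‖x‖ + x 2) / rho x) + α

/-- `D(θ) = cos θ + sin²θ · L(θ)`, written in Cartesian variables. -/
def Dfun (α : ℝ) (x : V3) : ℝ := x 2 / ‖x‖ + (rho x / ‖x‖) ^ 2 * Lfun α x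

/-- the explicit velocity field of Example 3.1 (case `c₃ = -4`). -/
def u16 (α : ℝ) (x : V3) : V3 :=
  ‖x‖⁻¹ • ((4 * (rho x / ‖x‖) * (1 - (x 2 / ‖x‖) * Lfun α x) / Dfun α x) • eThv x
    + (-4 - 8 * (1 - (x 2 / ‖x‖) * Lfun α x) / (Dfun α x) ^ 2) • eRv x)

/-- the explicit pressure of Example 3.1 (case `c₃ = -4`). -/
def p16 (α : ℝ) (x : V3) : ℝ :=
  (8 * (-2 + (x 2 / ‖x‖) * Lfun α x - (rho x / ‖x‖) ^ 2 * (Lfun α x) ^ 2)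
    / (Dfun α x) ^ 2) / ‖x‖ ^ 2

/-!
For a `0`-homogeneous potential `Ψ`, the field `u = ∇Ψ - (ΔΨ) x` is divergence-free, and Euler's
relation makes `(u · ∇)u - Δu` a gradient plus a multiple of `x`. That multiple cancels against the
gradient of `c / |x|²` exactly when
`∇Ψ · ∇ΔΨ + (ΔΨ)² - Δ(ΔΨ) = -2c / |x|⁴`.

For `Ψ = ψ(cos θ)` and `y = cos θ`, this equation is the second derivative of the Riccati equation
`(1 - y²) f' + 2 y f + f² / 2 = a + b y + c' y²` for `f = -(1 - y²) ψ' = sin θ · u_θ`, with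
`c' = -c`. The given solution has `ψ = -2 log w`, which linearizes the Riccati equation with
right-hand side `4 y² - 4` to `(1 - y²) w' + 2 y w = 2`; the solutions `w` are the denominators `D`.

At the south pole `D → -1`, while `L` and `log (dist x S)` differ by a bounded amount, so `u_θ` is
negligible and `u_r ~ -8 log (dist x S)`, of norm `-8 log (dist x S)`.
-/

section RealFunctions

lemma tendsto_add_div_atBot {ι : Type*} {l : Filter ι} {f g : ι → ℝ} {c : ℝ}
    (hf : Tendsto f l atBot) (hg : Tendsto g l (𝓝 c)) :
    Tendsto (fun i => (f i + g i) / f i) l (𝓝 1) := by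
  have h := (hg.div_atBot hf).const_add 1
  rw [add_zero] at h
  refine h.congr' ?_
  filter_upwards [hf.eventually_lt_atBot 0] with i hi
  rw [add_div, div_self hi.ne]

lemma tendsto_sqrt_sq_add_sq_div {ι : Type*} {l : Filter ι} {f g h : ι → ℝ} {a b : ℝ}
    (hf : Tendsto (fun i => f i / h i) l (𝓝 a)) (hg : Tendsto (fun i => g i / h i) l (𝓝 b))
    (hh : ∀ᶠ i in l, h i < 0) :
    Tendsto (fun i => √(f i ^ 2 + g i ^ 2) / h i) l (𝓝 (-√(a ^ 2 + b ^ 2))) := by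
  refine ((((hf.pow 2).add (hg.pow 2)).sqrt).neg).congr' ?_
  filter_upwards [hh] with i hi
  rw [div_pow, div_pow, ← add_div, sqrt_div' _ (sq_nonneg _), sqrt_sq_eq_abs, abs_of_neg hi,
    div_neg, neg_neg]

variable {y : ℝ}

lemma artanh_eq_sub_log (hy : y ∈ Set.Ioo (-1) 1) :
    artanh y = (log (1 + y) - log (1 - y)) / 2 := by
  rw [artanh_eq_half_log (Set.Ioo_subset_Icc_self hy),
    log_div (by linarith [hy.1]) (by linarith [hy.2])]
  ring

lemma artanh_eventuallyEq (hy : y ∈ Set.Ioo (-1) 1) :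
    artanh =ᶠ[𝓝 y] fun t => (log (1 + t) - log (1 - t)) / 2 := by
  filter_upwards [isOpen_Ioo.mem_nhds hy] with t ht using artanh_eq_sub_log ht

lemma contDiffAt_artanh {n : WithTop ℕ∞} (hy : y ∈ Set.Ioo (-1) 1) : ContDiffAt ℝ n artanh y := by
  have h₁ : 1 + y ≠ 0 := by linarith [hy.1]
  have h₂ : 1 - y ≠ 0 := by linarith [hy.2]
  refine ContDiffAt.congr_of_eventuallyEq ?_ (artanh_eventuallyEq hy)
  fun_prop (disch := assumption)

lemma hasDerivAt_artanh (hy : y ∈ Set.Ioo (-1) 1) : HasDerivAt artanh (1 - y ^ 2)⁻¹ y := by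
  have h₁ : 1 + y ≠ 0 := by linarith [hy.1]
  have h₂ : 1 - y ≠ 0 := by linarith [hy.2]
  have hlog := ((((hasDerivAt_id y).const_add 1).log h₁).fun_sub
    (((hasDerivAt_id y).const_sub 1).log h₂)).div_const 2
  refine (hlog.congr_of_eventuallyEq (artanh_eventuallyEq hy)).congr_deriv ?_
  rw [show 1 - y ^ 2 = (1 + y) * (1 - y) by ring]
  simp only [id]
  field_simp
  ring

end RealFunctions

section PartialDerivatives

variable {f g : V3 → ℝ} {x : V3}

lemma pd_congr (h : f =ᶠ[𝓝 x] g) (j : Fin 3) : pd j f x = pd j g x := by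
  rw [pd, pd, h.fderiv_eq]

lemma pd_eventuallyEq (h : f =ᶠ[𝓝 x] g) (j : Fin 3) : pd j f =ᶠ[𝓝 x] pd j g :=
  h.eventuallyEq_nhds.mono fun _ hy => pd_congr hy j

lemma lap3_congr (h : f =ᶠ[𝓝 x] g) : lap3 f x = lap3 g x :=
  Finset.sum_congr rfl fun j _ => pd_congr (pd_eventuallyEq h j) j

lemma pd_add (hf : DifferentiableAt ℝ f x) (hg : DifferentiableAt ℝ g x) (j : Fin 3) :
    pd j (fun y => f y + g y) x = pd j f x + pd j g x := by
  simp only [pd, fderiv_fun_add hf hg, add_apply]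

lemma pd_sub (hf : DifferentiableAt ℝ f x) (hg : DifferentiableAt ℝ g x) (j : Fin 3) :
    pd j (fun y => f y - g y) x = pd j f x - pd j g x := by
  simp only [pd, fderiv_fun_sub hf hg, sub_apply]

lemma pd_neg (f : V3 → ℝ) (x : V3) (j : Fin 3) : pd j (fun y => -f y) x = -pd j f x := by
  simp only [pd, fderiv_fun_neg, neg_apply]

lemma pd_const_mul (hf : DifferentiableAt ℝ f x) (c : ℝ) (j : Fin 3) :
    pd j (fun y => c * f y) x = c * pd j f x := by
  simp only [pd, fderiv_const_mul hf, smul_apply, smul_eq_mul]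

lemma pd_mul (hf : DifferentiableAt ℝ f x) (hg : DifferentiableAt ℝ g x) (j : Fin 3) :
    pd j (fun y => f y * g y) x = pd j f x * g x + f x * pd j g x := by
  simp only [pd, fderiv_fun_mul hf hg, add_apply,
    smul_apply, smul_eq_mul]
  ring

lemma pd_sum {ι : Type*} {s : Finset ι} {F : ι → V3 → ℝ}
    (hF : ∀ k ∈ s, DifferentiableAt ℝ (F k) x) (j : Fin 3) :
    pd j (fun y => ∑ k ∈ s, F k y) x = ∑ k ∈ s, pd j (F k) x := by
  simp only [pd, fderiv_fun_sum hF, sum_apply]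

lemma pd_comp_hasDerivAt {φ : ℝ → ℝ} {φ' : ℝ} (hφ : HasDerivAt φ φ' (f x))
    (hf : DifferentiableAt ℝ f x) (j : Fin 3) : pd j (fun y => φ (f y)) x = φ' * pd j f x := by
  have := (hφ.comp_hasFDerivAt x hf.hasFDerivAt).fderiv
  simp only [Function.comp_def] at this
  simp only [pd, this, smul_apply, smul_eq_mul]

lemma differentiableAt_coord (i : Fin 3) (x : V3) : DifferentiableAt ℝ (fun y : V3 => y i) x := by
  fun_prop

lemma pd_coord (i j : Fin 3) (x : V3) : pd j (fun y => y i) x = if j = i then 1 else 0 := by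
  have : HasFDerivAt (fun y : V3 => y i) (EuclideanSpace.proj i : V3 →L[ℝ] ℝ) x :=
    (EuclideanSpace.proj i : V3 →L[ℝ] ℝ).hasFDerivAt
  simp [pd, this.fderiv, e3, eq_comm]

lemma differentiableAt_norm (hx : x ≠ 0) : DifferentiableAt ℝ (fun y : V3 => ‖y‖) x :=
  differentiableAt_id.norm ℝ hx

lemma pd_norm (hx : x ≠ 0) (j : Fin 3) : pd j (fun y => ‖y‖) x = x j / ‖x‖ := by
  have hsq : pd j (fun y => ‖y‖ ^ 2) x = 2 * x j := by
    rw [pd, (hasStrictFDerivAt_norm_sq x).hasFDerivAt.fderiv]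
    simp [e3, EuclideanSpace.inner_single_right]
  rw [pd_comp_hasDerivAt (hasDerivAt_pow 2 ‖x‖) (differentiableAt_norm hx)] at hsq
  rw [eq_div_iff (norm_ne_zero_iff.2 hx)]
  push_cast at hsq
  linarith

lemma differentiableAt_norm_zpow (hx : x ≠ 0) (n : ℤ) :
    DifferentiableAt ℝ (fun y : V3 => ‖y‖ ^ n) x :=
  (differentiableAt_norm hx).zpow (Or.inl (norm_ne_zero_iff.2 hx))

lemma pd_norm_zpow (hx : x ≠ 0) (n : ℤ) (j : Fin 3) :
    pd j (fun y => ‖y‖ ^ n) x = n * ‖x‖ ^ (n - 2) * x j := by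
  have hn := norm_ne_zero_iff.2 hx
  rw [pd_comp_hasDerivAt (hasDerivAt_zpow n ‖x‖ (Or.inl hn)) (differentiableAt_norm hx),
    pd_norm hx, show n - 2 = n - 1 - 1 by ring, zpow_sub_one₀ hn (n - 1)]
  ring

lemma contDiffAt_pd {m n : WithTop ℕ∞} (hf : ContDiffAt ℝ n f x) (hmn : m + 1 ≤ n) (j : Fin 3) :
    ContDiffAt ℝ m (pd j f) x :=
  (hf.fderiv_right hmn).clm_apply contDiffAt_const

lemma contDiffAt_lap3 {m n : WithTop ℕ∞} (hf : ContDiffAt ℝ n f x) (hmn : m + 1 + 1 ≤ n) :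
    ContDiffAt ℝ m (lap3 f) x :=
  ContDiffAt.sum fun j _ => contDiffAt_pd (contDiffAt_pd hf hmn j) le_rfl j

lemma eventually_differentiableAt {n : WithTop ℕ∞} (hf : ContDiffAt ℝ n f x) (hn : 1 ≤ n) :
    ∀ᶠ y in 𝓝 x, DifferentiableAt ℝ f y :=
  ((hf.of_le hn).eventually (by simp)).mono fun _ hy => hy.differentiableAt (by simp)

lemma differentiableAt_pd (hf : ContDiffAt ℝ 2 f x) (j : Fin 3) : DifferentiableAt ℝ (pd j f) x :=
  (contDiffAt_pd (m := 1) hf (by norm_num) j).differentiableAt (by simp)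

lemma pd_comm (hf : ContDiffAt ℝ 2 f x) (i j : Fin 3) : pd i (pd j f) x = pd j (pd i f) x := by
  have hd : DifferentiableAt ℝ (fderiv ℝ f) x :=
    (hf.fderiv_right (m := 1) (by norm_num)).differentiableAt (by simp)
  have key (k l : Fin 3) : pd k (pd l f) x = fderiv ℝ (fderiv ℝ f) x (e3 k) (e3 l) := by
    change fderiv ℝ (fun y => fderiv ℝ f y (e3 l)) x (e3 k) = _
    simp [fderiv_clm_apply hd (differentiableAt_const _)]
  rw [key, key]
  exact (hf.isSymmSndFDerivAt (by simp)).eq _ _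

end PartialDerivatives

section Laplacian

variable {f g : V3 → ℝ} {x : V3}

lemma lap3_sub (hf : ContDiffAt ℝ 2 f x) (hg : ContDiffAt ℝ 2 g x) :
    lap3 (fun y => f y - g y) x = lap3 f x - lap3 g x := by
  rw [lap3, lap3, lap3, ← Finset.sum_sub_distrib]
  refine Finset.sum_congr rfl fun j _ => ?_
  rw [← pd_sub (differentiableAt_pd hf j) (differentiableAt_pd hg j)]
  refine pd_congr ?_ j
  filter_upwards [eventually_differentiableAt hf (by norm_num),
    eventually_differentiableAt hg (by norm_num)] with y hfy hgy using pd_sub hfy hgy j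

lemma lap3_mul_coord (hf : ContDiffAt ℝ 2 f x) (i : Fin 3) :
    lap3 (fun y => f y * y i) x = lap3 f x * x i + 2 * pd i f x := by
  have second_pd (j : Fin 3) : pd j (pd j fun y => f y * y i) x =
      pd j (pd j f) x * x i + if j = i then 2 * pd j f x else 0 := by
    have first_pd : pd j (fun y => f y * y i) =ᶠ[𝓝 x]
        fun y => pd j f y * y i + (if j = i then 1 else 0) * f y := by
      filter_upwards [eventually_differentiableAt hf (by norm_num)] with y hy
      rw [pd_mul hy (differentiableAt_coord i y), pd_coord, mul_comm (f y)]
    have hfx : DifferentiableAt ℝ f x := hf.differentiableAt (by simp)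
    have hpd := differentiableAt_pd hf j
    have hi := differentiableAt_coord i x
    rw [pd_congr first_pd, pd_add (hpd.fun_mul hi) (hfx.const_mul _), pd_mul hpd hi,
      pd_const_mul hfx, pd_coord]
    split_ifs <;> ring
  rw [lap3, Finset.sum_congr rfl fun j _ => second_pd j, Finset.sum_add_distrib, ← Finset.sum_mul]
  simp [lap3]

lemma pd_lap3 (hf : ContDiffAt ℝ 3 f x) (i : Fin 3) : pd i (lap3 f) x = lap3 (pd i f) x := by
  have hpd (j : Fin 3) : ContDiffAt ℝ 2 (pd j f) x := contDiffAt_pd hf (by norm_num) j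
  have hf₂ : ∀ᶠ y in 𝓝 x, ContDiffAt ℝ 2 f y := (hf.of_le (by norm_num)).eventually (by simp)
  unfold lap3
  rw [pd_sum fun j _ => differentiableAt_pd (hpd j) j]
  refine Finset.sum_congr rfl fun j _ => ?_
  rw [pd_comm (hpd j)]
  exact pd_congr (hf₂.mono fun y hy => pd_comm hy i j) j

end Laplacian

section EulerHomogeneous

/-- Homogeneity of degree `n` near `x`, in the infinitesimal form `y · ∇f(y) = n f(y)` of Euler's
relation; degree and relation are local, so no invariance of the domain under scaling is needed. -/
def EulerHomogeneousAt (n : ℝ) (f : V3 → ℝ) (x : V3) : Prop :=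
  ∀ᶠ y in 𝓝 x, ∑ j, y j * pd j f y = n * f y

variable {n : ℝ} {f : V3 → ℝ} {x : V3}

namespace EulerHomogeneousAt

lemma sum {ι : Type*} {s : Finset ι} {F : ι → V3 → ℝ}
    (hF : ∀ k ∈ s, ContDiffAt ℝ 1 (F k) x) (h : ∀ k ∈ s, EulerHomogeneousAt n (F k) x) :
    EulerHomogeneousAt n (fun y => ∑ k ∈ s, F k y) x := by
  have hd : ∀ᶠ y in 𝓝 x, ∀ k ∈ s, DifferentiableAt ℝ (F k) y :=
    (Filter.eventually_all_finset s).2 fun k hk => eventually_differentiableAt (hF k hk) le_rfl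
  filter_upwards [hd, (Filter.eventually_all_finset s).2 h] with y hdy hy
  simp_rw [pd_sum hdy, Finset.mul_sum]
  rw [Finset.sum_comm, Finset.sum_congr rfl hy]

lemma pd (h : EulerHomogeneousAt n f x) (hf : ContDiffAt ℝ 2 f x) (i : Fin 3) :
    EulerHomogeneousAt (n - 1) (pd i f) x := by
  filter_upwards [h.eventually_nhds, hf.eventually (by simp)] with y hy hfy
  have hdf := hfy.differentiableAt (by simp)
  have hdpd := differentiableAt_pd hfy
  have hdiff : _root_.pd i (fun z => ∑ j, z j * _root_.pd j f z) y = n * _root_.pd i f y := by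
    rw [pd_congr hy, pd_const_mul hdf]
  rw [pd_sum fun j _ => (differentiableAt_coord j y).fun_mul (hdpd j)] at hdiff
  simp_rw [pd_mul (differentiableAt_coord _ y) (hdpd _), pd_coord, pd_comm hfy i] at hdiff
  simp only [ite_mul, one_mul, zero_mul, Finset.sum_add_distrib, Finset.sum_ite_eq,
    Finset.mem_univ, if_true] at hdiff
  linarith

lemma lap3 (h : EulerHomogeneousAt n f x) (hf : ContDiffAt ℝ 3 f x) :
    EulerHomogeneousAt (n - 2) (lap3 f) x := by
  have hpd (j : Fin 3) : ContDiffAt ℝ 2 (_root_.pd j f) x :=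
    contDiffAt_pd hf (by norm_num) j
  have hdeg : n - 2 = n - 1 - 1 := by ring
  rw [hdeg]
  exact sum (fun j _ => contDiffAt_pd (hpd j) (by norm_num) j)
    fun j _ => (h.pd (hf.of_le (by norm_num)) j).pd (hpd j) j

end EulerHomogeneousAt

end EulerHomogeneous

section PotentialFlow

/-- The velocity field `∇Ψ - (ΔΨ) x`, which is divergence-free when `Ψ` is `0`-homogeneous. -/
def potentialVelocity (Ψ : V3 → ℝ) (y : V3) : V3 :=
  WithLp.toLp 2 fun i => pd i Ψ y - lap3 Ψ y * y i

/-- The pressure `-ΔΨ - |∇Ψ|² / 2 + c / |x|²` accompanying `potentialVelocity Ψ`; the constant `c`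
is a free parameter. -/
def potentialPressure (c : ℝ) (Ψ : V3 → ℝ) (y : V3) : ℝ :=
  -lap3 Ψ y - (∑ j, pd j Ψ y ^ 2) / 2 + c / ‖y‖ ^ 2

variable {Ψ : V3 → ℝ} {x : V3}

lemma pd_potentialVelocity (hΨ : ContDiffAt ℝ 3 Ψ x) (i j : Fin 3) :
    pd j (fun y => potentialVelocity Ψ y i) x =
      pd j (pd i Ψ) x - (pd j (lap3 Ψ) x * x i + lap3 Ψ x * if j = i then 1 else 0) := by
  have hκ : DifferentiableAt ℝ (lap3 Ψ) x :=
    (contDiffAt_lap3 (m := 1) hΨ (by norm_num)).differentiableAt (by simp)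
  have hi := differentiableAt_coord i x
  change pd j (fun y => pd i Ψ y - lap3 Ψ y * y i) x = _
  rw [pd_sub (differentiableAt_pd (hΨ.of_le (by norm_num)) i) (hκ.fun_mul hi), pd_mul hκ hi,
    pd_coord]

lemma divergence_potentialVelocity (hΨ : ContDiffAt ℝ 3 Ψ x) (h : EulerHomogeneousAt 0 Ψ x) :
    ∑ j, pd j (fun y => potentialVelocity Ψ y j) x = 0 := by
  have euler := (h.lap3 hΨ).self_of_nhds
  simp only [Fin.sum_univ_three, mul_comm (x _)] at euler
  simp only [pd_potentialVelocity hΨ, if_true, Finset.sum_sub_distrib, Finset.sum_add_distrib]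
  rw [← lap3]
  simp only [Fin.sum_univ_three]
  linarith

lemma convection_potentialVelocity (hΨ : ContDiffAt ℝ 3 Ψ x) (h : EulerHomogeneousAt 0 Ψ x)
    (i : Fin 3) :
    ∑ j, potentialVelocity Ψ x j * pd j (fun y => potentialVelocity Ψ y i) x =
      ∑ j, pd j Ψ x * pd i (pd j Ψ) x
        - (∑ j, pd j Ψ x * pd j (lap3 Ψ) x + lap3 Ψ x ^ 2) * x i := by
  have hΨ₂ : ContDiffAt ℝ 2 Ψ x := hΨ.of_le (by norm_num)
  have euler_pd := (h.pd hΨ₂ i).self_of_nhds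
  have euler_lap3 := (h.lap3 hΨ).self_of_nhds
  simp only [pd_potentialVelocity hΨ, pd_comm hΨ₂ i]
  simp only [potentialVelocity]
  have expand (a b c d : Fin 3 → ℝ) (κ t : ℝ) (y : V3) :
      ∑ j, (a j - κ * y j) * (b j - (c j * t + κ * d j)) =
      ∑ j, a j * b j - (∑ j, a j * c j) * t - κ * ∑ j, a j * d j - κ * ∑ j, y j * b j
        + κ * (∑ j, y j * c j) * t + κ ^ 2 * ∑ j, y j * d j := by
    simp only [Fin.sum_univ_three]; ring
  rw [expand, euler_pd, euler_lap3]
  simp only [mul_ite, mul_one, mul_zero, Finset.sum_ite_eq', Finset.mem_univ, if_true]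
  ring

lemma lap3_potentialVelocity (hΨ : ContDiffAt ℝ 4 Ψ x) (i : Fin 3) :
    lap3 (fun y => potentialVelocity Ψ y i) x =
      -pd i (lap3 Ψ) x - lap3 (lap3 Ψ) x * x i := by
  have hκ : ContDiffAt ℝ 2 (lap3 Ψ) x := contDiffAt_lap3 hΨ (by norm_num)
  have hpd : ContDiffAt ℝ 2 (pd i Ψ) x := contDiffAt_pd hΨ (by norm_num) i
  have hi : ContDiffAt ℝ 2 (fun y : V3 => y i) x := by fun_prop
  change lap3 (fun y => pd i Ψ y - lap3 Ψ y * y i) x = _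
  rw [lap3_sub hpd (hκ.mul hi), lap3_mul_coord hκ, ← pd_lap3 (hΨ.of_le (by norm_num))]
  ring

lemma pd_potentialPressure (hΨ : ContDiffAt ℝ 3 Ψ x) (hx : x ≠ 0) (c : ℝ) (i : Fin 3) :
    pd i (potentialPressure c Ψ) x =
      -pd i (lap3 Ψ) x - ∑ j, pd j Ψ x * pd i (pd j Ψ) x - 2 * c * x i / ‖x‖ ^ 4 := by
  have : ‖x‖ ≠ 0 := norm_ne_zero_iff.2 hx
  have hκ : DifferentiableAt ℝ (lap3 Ψ) x :=
    (contDiffAt_lap3 (m := 1) hΨ (by norm_num)).differentiableAt (by simp)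
  have hpd (j : Fin 3) : DifferentiableAt ℝ (pd j Ψ) x :=
    differentiableAt_pd (hΨ.of_le (by norm_num)) j
  have hsum : DifferentiableAt ℝ (fun y => ∑ j, pd j Ψ y ^ 2) x :=
    DifferentiableAt.fun_sum fun j _ => (hpd j).fun_pow 2
  have hkin : pd i (fun y => ∑ j, pd j Ψ y ^ 2) x = 2 * ∑ j, pd j Ψ x * pd i (pd j Ψ) x := by
    simp only [pd_sum fun j _ => (hpd j).fun_pow 2, Finset.mul_sum]
    refine Finset.sum_congr rfl fun j _ => ?_
    rw [pd_comp_hasDerivAt (hasDerivAt_pow 2 _) (hpd j)]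
    push_cast
    ring
  have hrad : pd i (fun y => c * ‖y‖ ^ (-2 : ℤ)) x = -2 * c * x i / ‖x‖ ^ 4 := by
    rw [pd_const_mul (differentiableAt_norm_zpow hx _), pd_norm_zpow hx]
    simp only [Int.reduceSub, Int.reduceNeg, zpow_neg, zpow_ofNat]
    push_cast
    ring
  have hform : potentialPressure c Ψ = fun y =>
      (-lap3 Ψ y - 1 / 2 * ∑ j, pd j Ψ y ^ 2) + c * ‖y‖ ^ (-2 : ℤ) := by
    funext y
    simp only [potentialPressure, zpow_neg, zpow_ofNat]
    ring
  rw [hform, pd_add (hκ.fun_neg.fun_sub (hsum.const_mul _))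
    ((differentiableAt_norm_zpow hx _).const_mul c), hrad, pd_sub hκ.fun_neg (hsum.const_mul _),
    pd_neg, pd_const_mul hsum, hkin]
  ring

theorem nsEq_potentialVelocity (hΨ : ContDiffAt ℝ 4 Ψ x) (hx : x ≠ 0)
    (hom : EulerHomogeneousAt 0 Ψ x) {c : ℝ}
    (h : ∑ j, pd j Ψ x * pd j (lap3 Ψ) x + lap3 Ψ x ^ 2 - lap3 (lap3 Ψ) x = -2 * c / ‖x‖ ^ 4) :
    NSEq (potentialVelocity Ψ) (potentialPressure c Ψ) x := by
  have hΨ₃ : ContDiffAt ℝ 3 Ψ x := hΨ.of_le (by norm_num)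
  refine ⟨fun i => ?_, divergence_potentialVelocity hΨ₃ hom⟩
  rw [lap3_potentialVelocity hΨ, convection_potentialVelocity hΨ₃ hom,
    pd_potentialPressure hΨ₃ hx]
  linear_combination -x i * h

end PotentialFlow

section Zonal

/-- The axisymmetric function `|x|ⁿ g(cos θ)`, homogeneous of degree `n`, with profile `g`. -/
def zonal (n : ℤ) (g : ℝ → ℝ) (x : V3) : ℝ := ‖x‖ ^ n * g (x 2 / ‖x‖)

variable {g h : ℝ → ℝ} {x : V3}

lemma differentiableAt_cosPolar (hx : x ≠ 0) : DifferentiableAt ℝ (fun y : V3 => y 2 / ‖y‖) x := by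
  simpa only [div_eq_mul_inv] using (differentiableAt_coord 2 x).fun_mul
    ((differentiableAt_norm hx).fun_inv (norm_ne_zero_iff.2 hx))

lemma tendsto_cosPolar (hx : x ≠ 0) :
    Tendsto (fun y : V3 => y 2 / ‖y‖) (𝓝 x) (𝓝 (x 2 / ‖x‖)) :=
  (differentiableAt_cosPolar hx).continuousAt

lemma contDiffAt_zonal {m : WithTop ℕ∞} (hx : x ≠ 0) (hg : ContDiffAt ℝ m g (x 2 / ‖x‖)) :
    ContDiffAt ℝ m (zonal 0 g) x := by
  have hcos : ContDiffAt ℝ m (fun y : V3 => y 2 / ‖y‖) x :=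
    ContDiffAt.fun_div (by fun_prop) (contDiffAt_norm ℝ hx) (norm_ne_zero_iff.2 hx)
  have hzonal : zonal 0 g = fun y => g (y 2 / ‖y‖) := by
    funext y
    rw [zonal, zpow_zero, one_mul]
  rw [hzonal]
  exact hg.comp x hcos

lemma differentiableAt_zonal (hx : x ≠ 0) (n : ℤ) (hg : DifferentiableAt ℝ g (x 2 / ‖x‖)) :
    DifferentiableAt ℝ (zonal n g) x :=
  (differentiableAt_norm_zpow hx n).fun_mul
    (hg.fun_comp' x (differentiableAt_cosPolar hx))

lemma pd_cosPolar (hx : x ≠ 0) (j : Fin 3) :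
    pd j (fun y => y 2 / ‖y‖) x = (if j = 2 then ‖x‖⁻¹ else 0) - x 2 * x j / ‖x‖ ^ 3 := by
  have hdiv : (fun y : V3 => y 2 / ‖y‖) = fun y => y 2 * ‖y‖ ^ (-1 : ℤ) := by
    funext y
    rw [zpow_neg_one, div_eq_mul_inv]
  rw [hdiv, pd_mul (differentiableAt_coord 2 x) (differentiableAt_norm_zpow hx _), pd_coord,
    pd_norm_zpow hx]
  simp only [Int.reduceSub, Int.reduceNeg, zpow_neg, zpow_ofNat, ite_mul, one_mul, zero_mul]
  push_cast
  ring_nf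

lemma pd_zonal (hx : x ≠ 0) (n : ℤ) (hg : DifferentiableAt ℝ g (x 2 / ‖x‖)) (j : Fin 3) :
    pd j (zonal n g) x = zonal (n - 2) (fun y => n * g y - y * deriv g y) x * x j +
      (if j = 2 then 1 else 0) * zonal (n - 1) (deriv g) x := by
  have hn := norm_ne_zero_iff.2 hx
  have hcos := differentiableAt_cosPolar hx
  change pd j (fun y => ‖y‖ ^ n * g (y 2 / ‖y‖)) x = _
  rw [pd_mul (differentiableAt_norm_zpow hx n)
    (hg.fun_comp' x hcos), pd_norm_zpow hx,
    pd_comp_hasDerivAt hg.hasDerivAt hcos, pd_cosPolar hx]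
  simp only [zonal, zpow_sub₀ hn, zpow_ofNat]
  split_ifs <;> field_simp <;> ring

lemma euler_zonal (hx : x ≠ 0) (n : ℤ) (hg : DifferentiableAt ℝ g (x 2 / ‖x‖)) :
    ∑ j, x j * pd j (zonal n g) x = n * zonal n g x := by
  have hn := norm_ne_zero_iff.2 hx
  have hsplit (a b : ℝ) : ∑ j, x j * (a * x j + (if j = 2 then 1 else 0) * b) =
      a * ‖x‖ ^ 2 + x 2 * b := by
    rw [EuclideanSpace.real_norm_sq_eq]
    simp only [Fin.sum_univ_three, Fin.reduceEq, if_true, if_false]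
    ring
  simp only [pd_zonal hx n hg, hsplit, zonal, zpow_sub₀ hn, zpow_ofNat]
  field_simp
  ring

lemma sum_pd_zonal_mul_pd_zonal (hx : x ≠ 0) (m n : ℤ) (hg : DifferentiableAt ℝ g (x 2 / ‖x‖))
    (hh : DifferentiableAt ℝ h (x 2 / ‖x‖)) :
    ∑ j, pd j (zonal m g) x * pd j (zonal n h) x = zonal (m + n - 2)
      (fun y => m * n * (g y * h y) + (1 - y ^ 2) * (deriv g y * deriv h y)) x := by
  have hn := norm_ne_zero_iff.2 hx
  have hsplit (a b c d : ℝ) :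
      ∑ j, (a * x j + (if j = 2 then 1 else 0) * b) * (c * x j + (if j = 2 then 1 else 0) * d) =
      a * c * ‖x‖ ^ 2 + (a * d + b * c) * x 2 + b * d := by
    rw [EuclideanSpace.real_norm_sq_eq]
    simp only [Fin.sum_univ_three, Fin.reduceEq, if_true, if_false]
    ring
  simp only [pd_zonal hx _ hg, pd_zonal hx _ hh, hsplit, zonal, zpow_sub₀ hn, zpow_add₀ hn,
    zpow_ofNat]
  field_simp
  ring

lemma lap3_zonal (hx : x ≠ 0) (n : ℤ) (hg : ContDiffAt ℝ 2 g (x 2 / ‖x‖)) :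
    lap3 (zonal n g) x = zonal (n - 2) (fun y =>
      n * (n + 1) * g y - 2 * y * deriv g y + (1 - y ^ 2) * deriv (deriv g) y) x := by
  have hn := norm_ne_zero_iff.2 hx
  have hg₁ : DifferentiableAt ℝ g (x 2 / ‖x‖) := hg.differentiableAt (by simp)
  have hg₂ : DifferentiableAt ℝ (deriv g) (x 2 / ‖x‖) :=
    (hg.derivWithin (m := 1) (by norm_num)).differentiableAt (by simp)
  have hA : DifferentiableAt ℝ (fun y => n * g y - y * deriv g y) (x 2 / ‖x‖) := by fun_prop
  have hg_ev : ∀ᶠ y in 𝓝 (x 2 / ‖x‖), DifferentiableAt ℝ g y :=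
    (hg.eventually (by simp)).mono fun y hy => hy.differentiableAt (by simp)
  set A := zonal (n - 2) fun y => n * g y - y * deriv g y
  have hAx := differentiableAt_zonal hx (n - 2) hA
  have first_pd (j : Fin 3) : pd j (zonal n g) =ᶠ[𝓝 x] fun y =>
      A y * y j + (if j = 2 then 1 else 0) * zonal (n - 1) (deriv g) y := by
    filter_upwards [(tendsto_cosPolar hx).eventually hg_ev, eventually_ne_nhds hx] with y hy hy0
      using pd_zonal hy0 n hy j
  have second_pd (j : Fin 3) : pd j (pd j (zonal n g)) x = (x j * pd j A x + A x) +
      if j = 2 then pd j (zonal (n - 1) (deriv g)) x else 0 := by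
    have hB := differentiableAt_zonal hx (n - 1) hg₂
    have hj := differentiableAt_coord j x
    rw [pd_congr (first_pd j), pd_add (hAx.fun_mul hj) (hB.const_mul _), pd_mul hAx hj,
      pd_const_mul hB, pd_coord, if_pos rfl]
    split_ifs <;> ring
  rw [lap3, Finset.sum_congr rfl fun j _ => second_pd j, Finset.sum_add_distrib,
    Finset.sum_add_distrib, euler_zonal hx _ hA]
  simp only [Finset.sum_ite_eq', Finset.mem_univ, if_true, Finset.sum_const, Finset.card_univ,
    Fintype.card_fin, nsmul_eq_mul, pd_zonal hx _ hg₂]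
  simp only [A, zonal, zpow_sub₀ hn, zpow_ofNat]
  push_cast
  field_simp
  ring

end Zonal

section Riccati

/-- The function `sin θ · u_θ` of `cos θ`, at `|x| = 1`, for the velocity with potential
`zonal 0 ψ`. -/
def polarFlux (ψ : ℝ → ℝ) (y : ℝ) : ℝ := -((1 - y ^ 2) * deriv ψ y)

variable {ψ f : ℝ → ℝ} {x : V3} {t : ℝ}

lemma contDiffAt_polarFlux {m n : WithTop ℕ∞} (hψ : ContDiffAt ℝ n ψ t) (hmn : m + 1 ≤ n) :
    ContDiffAt ℝ m (polarFlux ψ) t := by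
  have := hψ.derivWithin hmn
  unfold polarFlux
  fun_prop

lemma lap3_zonal_zero (hx : x ≠ 0) (hψ : ContDiffAt ℝ 2 ψ (x 2 / ‖x‖)) :
    lap3 (zonal 0 ψ) x = zonal (-2) (fun y => -deriv (polarFlux ψ) y) x := by
  have hψ₂ : DifferentiableAt ℝ (deriv ψ) (x 2 / ‖x‖) :=
    (hψ.derivWithin (m := 1) (by norm_num)).differentiableAt (by simp)
  have hflux : deriv (polarFlux ψ) (x 2 / ‖x‖) = 2 * (x 2 / ‖x‖) * deriv ψ (x 2 / ‖x‖)
      - (1 - (x 2 / ‖x‖) ^ 2) * deriv (deriv ψ) (x 2 / ‖x‖) := by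
    have := (((hasDerivAt_pow 2 (x 2 / ‖x‖)).const_sub 1).fun_mul hψ₂.hasDerivAt).fun_neg.deriv
    simp only [Nat.cast_ofNat, Nat.add_one_sub_one, pow_one] at this
    change deriv (fun y => -((1 - y ^ 2) * deriv ψ y)) _ = _
    rw [this]
    ring
  rw [lap3_zonal hx 0 hψ, zonal, zonal, hflux]
  push_cast
  ring

lemma riccati_deriv_deriv {a b c : ℝ} (hf : ContDiffAt ℝ 3 f t)
    (h : ∀ᶠ y in 𝓝 t, (1 - y ^ 2) * deriv f y + 2 * y * f y + f y ^ 2 / 2 = a + b * y + c * y ^ 2) :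
    (1 - t ^ 2) * deriv (deriv (deriv f)) t - 2 * t * deriv (deriv f) t + 2 * deriv f t
      + deriv f t ^ 2 + f t * deriv (deriv f) t = 2 * c := by
  have h₁ : ∀ᶠ y in 𝓝 t, (1 - y ^ 2) * deriv (deriv f) y + 2 * f y + f y * deriv f y
      = b + 2 * c * y := by
    filter_upwards [h.eventually_nhds, hf.eventually (by simp)] with y hy hfy
    have hf₀ : HasDerivAt f _ y := (hfy.differentiableAt (by simp)).hasDerivAt
    have hf₁ : HasDerivAt (deriv f) _ y :=
      ((hfy.derivWithin (m := 1) (by norm_num)).differentiableAt (by simp)).hasDerivAt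
    have hl := (((((hasDerivAt_id y).fun_pow 2).const_sub 1).fun_mul hf₁).fun_add
      (((hasDerivAt_id y).const_mul 2).fun_mul hf₀)).fun_add ((hf₀.fun_pow 2).div_const 2)
    have hr := (((hasDerivAt_id y).const_mul b).const_add a).fun_add
      (((hasDerivAt_id y).fun_pow 2).const_mul c)
    have := hl.unique (hr.congr_of_eventuallyEq hy)
    simp only [Nat.cast_ofNat, id_eq, Nat.add_one_sub_one, pow_one, mul_one, neg_mul] at this
    linear_combination this
  have hf₀ : HasDerivAt f _ t := (hf.differentiableAt (by simp)).hasDerivAt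
  have hf₁ : HasDerivAt (deriv f) _ t :=
    ((hf.derivWithin (m := 1) (by norm_num)).differentiableAt (by simp)).hasDerivAt
  have hf₂ : HasDerivAt (deriv (deriv f)) _ t :=
    (((hf.derivWithin (m := 2) (by norm_num)).derivWithin (m := 1) (by norm_num)).differentiableAt
      (by simp)).hasDerivAt
  have hl := (((((hasDerivAt_id t).fun_pow 2).const_sub 1).fun_mul hf₂).fun_add
    (hf₀.const_mul 2)).fun_add (hf₀.fun_mul hf₁)
  have hr := ((hasDerivAt_id t).const_mul (2 * c)).const_add b
  have := hl.unique (hr.congr_of_eventuallyEq h₁)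
  simp only [Nat.cast_ofNat, id_eq, Nat.add_one_sub_one, pow_one, mul_one, neg_mul] at this
  linear_combination this

theorem nsEq_zonal_of_riccati (hx : x ≠ 0) (hψ : ContDiffAt ℝ 4 ψ (x 2 / ‖x‖)) {a b c : ℝ}
    (h : ∀ᶠ y in 𝓝 (x 2 / ‖x‖), (1 - y ^ 2) * deriv (polarFlux ψ) y + 2 * y * polarFlux ψ y
      + polarFlux ψ y ^ 2 / 2 = a + b * y + c * y ^ 2) :
    NSEq (potentialVelocity (zonal 0 ψ)) (potentialPressure (-c) (zonal 0 ψ)) x := by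
  have hflux : ContDiffAt ℝ 3 (polarFlux ψ) (x 2 / ‖x‖) := contDiffAt_polarFlux hψ (by norm_num)
  have hψ₁ : DifferentiableAt ℝ ψ (x 2 / ‖x‖) := hψ.differentiableAt (by simp)
  have hψ_near : ∀ᶠ y in 𝓝 x, y ≠ 0 ∧ ContDiffAt ℝ 4 ψ (y 2 / ‖y‖) :=
    (eventually_ne_nhds hx).and ((tendsto_cosPolar hx).eventually (hψ.eventually (by simp)))
  have hom : EulerHomogeneousAt 0 (zonal 0 ψ) x := by
    filter_upwards [hψ_near] with y ⟨hy, hψy⟩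
    simpa using euler_zonal hy 0 (hψy.differentiableAt (by simp))
  set κ : ℝ → ℝ := fun y => -deriv (polarFlux ψ) y with hκ_def
  have hκ : ContDiffAt ℝ 2 κ (x 2 / ‖x‖) := (hflux.derivWithin (by norm_num)).neg
  have hlap : lap3 (zonal 0 ψ) =ᶠ[𝓝 x] zonal (-2) κ := by
    filter_upwards [hψ_near] with y ⟨hy, hψy⟩ using lap3_zonal_zero hy (hψy.of_le (by norm_num))
  refine nsEq_potentialVelocity (contDiffAt_zonal hx hψ) hx hom ?_
  simp only [pd_congr hlap, lap3_congr hlap, hlap.self_of_nhds]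
  rw [sum_pd_zonal_mul_pd_zonal hx 0 (-2) hψ₁ (hκ.differentiableAt (by simp)), lap3_zonal hx _ hκ]
  simp only [hκ_def, deriv.fun_neg', zonal, Int.reduceNeg, Int.reduceSub, Int.reduceAdd, zpow_neg,
    zpow_ofNat]
  push_cast
  have hflux_def : polarFlux ψ (x 2 / ‖x‖) = -((1 - (x 2 / ‖x‖) ^ 2) * deriv ψ (x 2 / ‖x‖)) := rfl
  linear_combination (‖x‖ ^ 4)⁻¹ * (riccati_deriv_deriv hflux h)
    - (‖x‖ ^ 4)⁻¹ * deriv (deriv (polarFlux ψ)) (x 2 / ‖x‖) * hflux_def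

end Riccati

section SphericalFrame

variable {x : V3}

lemma rho_nonneg (x : V3) : 0 ≤ rho x := sqrt_nonneg _

lemma sq_rho (x : V3) : rho x ^ 2 = x 0 ^ 2 + x 1 ^ 2 := sq_sqrt (by positivity)

lemma sq_rho_add_sq (x : V3) : rho x ^ 2 + x 2 ^ 2 = ‖x‖ ^ 2 := by
  rw [sq_rho, EuclideanSpace.real_norm_sq_eq, Fin.sum_univ_three]

lemma ne_zero_of_rho_ne_zero (hρ : rho x ≠ 0) : x ≠ 0 := by
  rintro rfl
  simp [rho] at hρ

lemma sq_sinPolar (hx : x ≠ 0) : (rho x / ‖x‖) ^ 2 = 1 - (x 2 / ‖x‖) ^ 2 := by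
  have := norm_ne_zero_iff.2 hx
  field_simp
  linear_combination sq_rho_add_sq x

lemma cosPolar_mem_Ioo (hρ : rho x ≠ 0) : x 2 / ‖x‖ ∈ Set.Ioo (-1) 1 := by
  have hx := ne_zero_of_rho_ne_zero hρ
  have hsin : 0 < (rho x / ‖x‖) ^ 2 :=
    pow_pos (div_pos ((rho_nonneg x).lt_of_ne' hρ) (norm_pos_iff.2 hx)) 2
  exact abs_lt.1 ((sq_lt_one_iff_abs_lt_one _).1 (by linarith [sq_sinPolar hx]))

lemma norm_smul_eThv_add_smul_eRv (hρ : rho x ≠ 0) (a b : ℝ) :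
    ‖a • eThv x + b • eRv x‖ = √(a ^ 2 + b ^ 2) := by
  have hn := norm_ne_zero_iff.2 (ne_zero_of_rho_ne_zero hρ)
  rw [eq_comm, sqrt_eq_iff_eq_sq (by positivity) (norm_nonneg _),
    EuclideanSpace.real_norm_sq_eq, Fin.sum_univ_three]
  simp only [eThv, eRv, PiLp.continuousLinearEquiv_symm_apply, PiLp.add_apply, PiLp.smul_apply,
    Matrix.cons_val, smul_eq_mul]
  field_simp
  rw [← sq_rho x, ← sq_rho_add_sq x]
  ring

lemma potentialVelocity_zonal {ψ : ℝ → ℝ} (hρ : rho x ≠ 0) (hψ : ContDiffAt ℝ 2 ψ (x 2 / ‖x‖)) :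
    potentialVelocity (zonal 0 ψ) x =
      ‖x‖⁻¹ • ((polarFlux ψ (x 2 / ‖x‖) / (rho x / ‖x‖)) • eThv x +
        deriv (polarFlux ψ) (x 2 / ‖x‖) • eRv x) := by
  have hx := ne_zero_of_rho_ne_zero hρ
  have hn := norm_ne_zero_iff.2 hx
  have hflux : polarFlux ψ (x 2 / ‖x‖) = -((rho x / ‖x‖) ^ 2 * deriv ψ (x 2 / ‖x‖)) := by
    rw [polarFlux, sq_sinPolar hx]
  ext i
  simp only [potentialVelocity, pd_zonal hx 0 (hψ.differentiableAt (by simp)),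
    lap3_zonal_zero hx hψ, hflux, zonal]
  fin_cases i <;>
    simp only [eThv, eRv, PiLp.continuousLinearEquiv_symm_apply, PiLp.add_apply, PiLp.smul_apply,
      Matrix.cons_val, smul_eq_mul, Fin.zero_eta, Fin.mk_one, Fin.reduceFinMk, Fin.reduceEq,
      if_true, if_false, zero_sub, Int.reduceNeg, Int.cast_zero, zpow_neg, zpow_ofNat, pow_one] <;>
    field_simp <;> ring_nf
  rw [← sq_rho_add_sq x]
  ring

lemma potentialPressure_zonal {ψ : ℝ → ℝ} (hρ : rho x ≠ 0) (c : ℝ)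
    (hψ : ContDiffAt ℝ 2 ψ (x 2 / ‖x‖)) :
    potentialPressure c (zonal 0 ψ) x =
      (deriv (polarFlux ψ) (x 2 / ‖x‖)
        - polarFlux ψ (x 2 / ‖x‖) ^ 2 / (2 * (rho x / ‖x‖) ^ 2) + c) / ‖x‖ ^ 2 := by
  have hx := ne_zero_of_rho_ne_zero hρ
  have hn := norm_ne_zero_iff.2 hx
  have hψ₁ : DifferentiableAt ℝ ψ (x 2 / ‖x‖) := hψ.differentiableAt (by simp)
  simp only [potentialPressure, lap3_zonal_zero hx hψ, pow_two (pd _ _ _),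
    sum_pd_zonal_mul_pd_zonal hx 0 0 hψ₁ hψ₁, zonal, polarFlux, ← sq_sinPolar hx]
  simp only [Int.reduceNeg, zpow_neg, zpow_ofNat, zero_sub, add_zero]
  push_cast
  field_simp
  ring

end SphericalFrame

section LogarithmicSolution

/-- The denominator `D = cos θ + sin² θ · L` as a function of `y = cos θ`, where
`ln (cot (θ / 2)) = artanh y`. It solves the linear equation `(1 - y²) w' + 2 y w = 2`. -/
def logProfile (α y : ℝ) : ℝ := y + (1 - y ^ 2) * (artanh y + α)

/-- The potential profile whose `polarFlux` linearizes, through `ψ = -2 log w`, the Riccati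
equation of `u16` into the equation solved by `logProfile`. -/
def logPotential (α y : ℝ) : ℝ := -2 * log (logProfile α y)

variable {α y : ℝ} {x : V3}

lemma sq_logProfile_add (α y : ℝ) :
    logProfile α y ^ 2 + (1 - y ^ 2) * (1 - y * (artanh y + α)) ^ 2 =
      1 + (1 - y ^ 2) * (artanh y + α) ^ 2 := by
  rw [logProfile]
  ring

lemma contDiffAt_logProfile {n : WithTop ℕ∞} (α : ℝ) (hy : y ∈ Set.Ioo (-1) 1) :
    ContDiffAt ℝ n (logProfile α) y :=
  contDiffAt_id.add ((contDiffAt_const.sub (contDiffAt_id.pow 2)).mul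
    ((contDiffAt_artanh hy).add contDiffAt_const))

lemma hasDerivAt_logProfile (α : ℝ) (hy : y ∈ Set.Ioo (-1) 1) :
    HasDerivAt (logProfile α) (2 * (1 - y * (artanh y + α))) y := by
  have h : 1 - y ^ 2 ≠ 0 := by nlinarith [hy.1, hy.2]
  refine ((hasDerivAt_id y).add ((((hasDerivAt_id y).fun_pow 2).const_sub 1).fun_mul
    ((hasDerivAt_artanh hy).add_const α))).congr_deriv ?_
  simp only [id]
  field_simp
  ring

lemma contDiffAt_logPotential {n : WithTop ℕ∞} (hy : y ∈ Set.Ioo (-1) 1)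
    (hw : logProfile α y ≠ 0) : ContDiffAt ℝ n (logPotential α) y :=
  contDiffAt_const.mul ((contDiffAt_logProfile α hy).log hw)

lemma polarFlux_logPotential (hy : y ∈ Set.Ioo (-1) 1) (hw : logProfile α y ≠ 0) :
    polarFlux (logPotential α) y = 4 / logProfile α y - 4 * y := by
  have hψ : HasDerivAt (logPotential α) _ y := ((hasDerivAt_logProfile α hy).log hw).const_mul (-2)
  rw [polarFlux, hψ.deriv]
  field_simp
  rw [logProfile]
  ring

lemma polarFlux_logPotential_eq_mul (hy : y ∈ Set.Ioo (-1) 1) (hw : logProfile α y ≠ 0) :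
    polarFlux (logPotential α) y =
      (1 - y ^ 2) * (4 * (1 - y * (artanh y + α)) / logProfile α y) := by
  rw [polarFlux_logPotential hy hw]
  field_simp
  rw [logProfile]
  ring

lemma eventually_logProfile_ne_zero (hy : y ∈ Set.Ioo (-1) 1) (hw : logProfile α y ≠ 0) :
    ∀ᶠ t in 𝓝 y, t ∈ Set.Ioo (-1) 1 ∧ logProfile α t ≠ 0 :=
  (isOpen_Ioo.eventually_mem hy).and
    ((hasDerivAt_logProfile α hy).continuousAt.eventually_ne hw)

lemma deriv_polarFlux_logPotential (hy : y ∈ Set.Ioo (-1) 1) (hw : logProfile α y ≠ 0) :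
    deriv (polarFlux (logPotential α)) y =
      -4 - 8 * (1 - y * (artanh y + α)) / logProfile α y ^ 2 := by
  have hflux : polarFlux (logPotential α) =ᶠ[𝓝 y] fun t => 4 / logProfile α t - 4 * t :=
    (eventually_logProfile_ne_zero hy hw).mono fun t ⟨ht, hwt⟩ => polarFlux_logPotential ht hwt
  have hder := ((hasDerivAt_const y (4 : ℝ)).fun_div (hasDerivAt_logProfile α hy) hw).fun_sub
    ((hasDerivAt_id y).const_mul 4)
  rw [hflux.deriv_eq]
  refine hder.deriv.trans ?_
  ring

lemma riccati_polarFlux_logPotential (hy : y ∈ Set.Ioo (-1) 1) (hw : logProfile α y ≠ 0) :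
    (1 - y ^ 2) * deriv (polarFlux (logPotential α)) y + 2 * y * polarFlux (logPotential α) y
      + polarFlux (logPotential α) y ^ 2 / 2 = -4 + 0 * y + 4 * y ^ 2 := by
  rw [deriv_polarFlux_logPotential hy hw, polarFlux_logPotential hy hw]
  field_simp
  rw [logProfile]
  ring

lemma Lfun_eq_artanh (α : ℝ) (hρ : rho x ≠ 0) : Lfun α x = artanh (x 2 / ‖x‖) + α := by
  have hn := norm_pos_iff.2 (ne_zero_of_rho_ne_zero hρ)
  have hy := cosPolar_mem_Ioo hρ
  have hpos : 0 < ‖x‖ + x 2 := by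
    have := (lt_div_iff₀ hn).1 hy.1
    linarith
  have hpos' : 0 < ‖x‖ - x 2 := by
    have := (div_lt_iff₀ hn).1 hy.2
    linarith
  have hρ_pos : 0 < rho x := (rho_nonneg x).lt_of_ne' hρ
  have hcot : √((1 + x 2 / ‖x‖) / (1 - x 2 / ‖x‖)) = (‖x‖ + x 2) / rho x := by
    rw [sqrt_eq_iff_eq_sq _ (by positivity)]
    · have : 1 - x 2 / ‖x‖ ≠ 0 := by linarith [hy.2]
      field_simp
      linear_combination sq_rho_add_sq x
    · exact div_nonneg (by linarith [hy.1]) (by linarith [hy.2])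
  rw [Lfun, artanh, hcot]

lemma Dfun_eq_logProfile (α : ℝ) (hρ : rho x ≠ 0) : Dfun α x = logProfile α (x 2 / ‖x‖) := by
  rw [Dfun, Lfun_eq_artanh α hρ, logProfile, sq_sinPolar (ne_zero_of_rho_ne_zero hρ)]

lemma u16_eq_potentialVelocity (hρ : rho x ≠ 0) (hD : Dfun α x ≠ 0) :
    u16 α x = potentialVelocity (zonal 0 (logPotential α)) x := by
  have hy := cosPolar_mem_Ioo hρ
  have hx := ne_zero_of_rho_ne_zero hρ
  have hn := norm_ne_zero_iff.2 hx
  rw [Dfun_eq_logProfile α hρ] at hD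
  rw [potentialVelocity_zonal hρ (contDiffAt_logPotential hy hD),
    deriv_polarFlux_logPotential hy hD, polarFlux_logPotential_eq_mul hy hD, u16,
    Lfun_eq_artanh α hρ, Dfun_eq_logProfile α hρ, ← sq_sinPolar hx]
  congr 3
  field_simp

lemma p16_eq_potentialPressure (hρ : rho x ≠ 0) (hD : Dfun α x ≠ 0) :
    p16 α x = potentialPressure (-4) (zonal 0 (logPotential α)) x := by
  have hy := cosPolar_mem_Ioo hρ
  rw [Dfun_eq_logProfile α hρ] at hD
  rw [potentialPressure_zonal hρ _ (contDiffAt_logPotential hy hD),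
    deriv_polarFlux_logPotential hy hD, polarFlux_logPotential_eq_mul hy hD, p16,
    Lfun_eq_artanh α hρ, Dfun_eq_logProfile α hρ,
    sq_sinPolar (ne_zero_of_rho_ne_zero hρ)]
  congr 1
  have hsin_ne : 1 - (x 2 / ‖x‖) ^ 2 ≠ 0 := by nlinarith [hy.1, hy.2]
  generalize x 2 / ‖x‖ = y at hD hsin_ne ⊢
  field_simp
  linear_combination 16 * sq_logProfile_add α y

lemma nsEq_congr {u v : V3 → V3} {p q : V3 → ℝ} (hu : u =ᶠ[𝓝 x] v) (hp : p =ᶠ[𝓝 x] q) :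
    NSEq u p x ↔ NSEq v q x := by
  have hui (i : Fin 3) : (fun y => u y i) =ᶠ[𝓝 x] fun y => v y i :=
    hu.fun_comp fun w : V3 => w i
  simp only [NSEq, lap3_congr (hui _), pd_congr (hui _), pd_congr hp, hu.self_of_nhds]

theorem nsEq_u16 (hρ : rho x ≠ 0) (hD : Dfun α x ≠ 0) : NSEq (u16 α) (p16 α) x := by
  have hx := ne_zero_of_rho_ne_zero hρ
  have hy := cosPolar_mem_Ioo hρ
  have hw := Dfun_eq_logProfile α hρ ▸ hD
  have hreg : ∀ᶠ y in 𝓝 x, rho y ≠ 0 ∧ Dfun α y ≠ 0 := by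
    have hcont : Continuous rho := by unfold rho; fun_prop
    filter_upwards [hcont.continuousAt.eventually_ne hρ, (tendsto_cosPolar hx).eventually
      (eventually_logProfile_ne_zero hy hw)] with y hρy hwy
    exact ⟨hρy, Dfun_eq_logProfile α hρy ▸ hwy.2⟩
  rw [nsEq_congr (hreg.mono fun y hy => u16_eq_potentialVelocity hy.1 hy.2)
    (hreg.mono fun y hy => p16_eq_potentialPressure hy.1 hy.2)]
  exact nsEq_zonal_of_riccati hx (contDiffAt_logPotential hy hw)
    ((eventually_logProfile_ne_zero hy hw).mono fun t ht =>
      riccati_polarFlux_logPotential ht.1 ht.2)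

end LogarithmicSolution

section SouthPole

/-- The component `u_θ` of `u16` on the unit sphere, as a function of `y = cos θ`. -/
def polarComponent (α y : ℝ) : ℝ :=
  4 * √(1 - y ^ 2) * (1 - y * (artanh y + α)) / logProfile α y

/-- The component `u_r` of `u16` on the unit sphere, as a function of `y = cos θ`. -/
def radialComponent (α y : ℝ) : ℝ :=
  -4 - 8 * (1 - y * (artanh y + α)) / logProfile α y ^ 2

variable {x : V3}

/-- The logarithm of the distance to `S3` on the unit sphere, as a function of `y = cos θ`. -/
def logDistSouth (y : ℝ) : ℝ := log (2 * (1 + y)) / 2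

lemma tendsto_logDistSouth : Tendsto logDistSouth (𝓝[>] (-1)) atBot := by
  refine (tendsto_log_nhdsGT_zero.comp (tendsto_nhdsWithin_iff.2 ⟨?_, ?_⟩)).atBot_div_const two_pos
  · exact (Continuous.tendsto' (by fun_prop) _ _ (by norm_num)).mono_left nhdsWithin_le_nhds
  · filter_upwards [self_mem_nhdsWithin] with y hy
    rw [Set.mem_Ioi] at hy ⊢
    linarith

lemma eventually_mem_Ioo_nhdsGT : ∀ᶠ y in 𝓝[>] (-1 : ℝ), y ∈ Set.Ioo (-1) 1 :=
  Ioo_mem_nhdsGT (by norm_num)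

lemma tendsto_logProfile (α : ℝ) : Tendsto (logProfile α) (𝓝[>] (-1)) (𝓝 (-1)) := by
  have hcont : Continuous fun y : ℝ => y + (((1 - y) * ((1 + y) * log (1 + y))
      - (1 + y) * ((1 - y) * log (1 - y))) / 2 + (1 - y ^ 2) * α) := by
    have : Continuous fun y : ℝ => (1 + y) * log (1 + y) := continuous_mul_log.comp (by fun_prop)
    have : Continuous fun y : ℝ => (1 - y) * log (1 - y) := continuous_mul_log.comp (by fun_prop)
    fun_prop
  refine ((hcont.tendsto' (-1) (-1) (by norm_num)).mono_left nhdsWithin_le_nhds).congr' ?_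
  filter_upwards [eventually_mem_Ioo_nhdsGT] with y hy
  rw [logProfile, artanh_eq_sub_log hy]
  ring

lemma tendsto_artanh_add_div (α : ℝ) :
    Tendsto (fun y => (artanh y + α) / logDistSouth y) (𝓝[>] (-1)) (𝓝 1) := by
  have hrem : Tendsto (fun y : ℝ => α - log (2 * (1 - y)) / 2) (𝓝[>] (-1))
      (𝓝 (α - log (2 * (1 - -1)) / 2)) := by
    have : ContinuousAt (fun y : ℝ => α - log (2 * (1 - y)) / 2) (-1) := by
      fun_prop (disch := norm_num)
    exact this.tendsto.mono_left nhdsWithin_le_nhds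
  refine (tendsto_add_div_atBot tendsto_logDistSouth hrem).congr' ?_
  filter_upwards [eventually_mem_Ioo_nhdsGT] with y hy
  rw [artanh_eq_sub_log hy, logDistSouth, log_mul two_ne_zero (by linarith [hy.1]),
    log_mul two_ne_zero (by linarith [hy.2])]
  ring

lemma tendsto_one_sub_mul_artanh_div (α : ℝ) :
    Tendsto (fun y => (1 - y * (artanh y + α)) / logDistSouth y) (𝓝[>] (-1)) (𝓝 1) := by
  have hid : Tendsto (fun y : ℝ => y) (𝓝[>] (-1)) (𝓝 (-1)) := nhdsWithin_le_nhds
  have h := (tendsto_logDistSouth.const_div_atBot 1).sub (hid.mul (tendsto_artanh_add_div α))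
  convert h using 2 <;> ring

lemma tendsto_polarComponent_div (α : ℝ) :
    Tendsto (fun y => polarComponent α y / logDistSouth y) (𝓝[>] (-1)) (𝓝 0) := by
  have hsin : Tendsto (fun y : ℝ => 4 * √(1 - y ^ 2)) (𝓝[>] (-1)) (𝓝 0) :=
    (Continuous.tendsto' (by fun_prop) _ _ (by norm_num)).mono_left nhdsWithin_le_nhds
  have h := (hsin.mul (tendsto_one_sub_mul_artanh_div α)).div (tendsto_logProfile α) (by norm_num)
  rw [zero_mul, zero_div] at h
  refine h.congr fun y => ?_
  simp only [Pi.div_apply, polarComponent]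
  ring

lemma tendsto_radialComponent_div (α : ℝ) :
    Tendsto (fun y => radialComponent α y / logDistSouth y) (𝓝[>] (-1)) (𝓝 (-8)) := by
  have h := (tendsto_logDistSouth.const_div_atBot (-4)).sub
    (((tendsto_one_sub_mul_artanh_div α).const_mul 8).div ((tendsto_logProfile α).pow 2)
      (by norm_num))
  have hlim : (0 : ℝ) - 8 * 1 / (-1) ^ 2 = -8 := by norm_num
  rw [hlim] at h
  refine h.congr fun y => ?_
  simp only [Pi.div_apply, radialComponent]
  ring

lemma sq_dist_S3 (hx : x ∈ sphere2) : dist x S3 ^ 2 = 2 * (1 + x 2) := by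
  have hn : ‖x‖ = 1 := mem_sphere_zero_iff_norm.1 hx
  rw [dist_eq_norm, norm_sub_sq_real, hn, S3, EuclideanSpace.inner_single_right,
    PiLp.norm_single]
  simp only [ringHom_apply, norm_neg, norm_one]
  ring

lemma log_dist_S3 (hx : x ∈ sphere2) : log (dist x S3) = logDistSouth (x 2) := by
  rw [logDistSouth, ← sq_dist_S3 hx, log_pow]
  push_cast
  ring

lemma norm_u16_of_mem_sphere2 (α : ℝ) (hx : x ∈ sphere2) (hρ : rho x ≠ 0) :
    ‖u16 α x‖ = √(polarComponent α (x 2) ^ 2 + radialComponent α (x 2) ^ 2) := by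
  have hn : ‖x‖ = 1 := mem_sphere_zero_iff_norm.1 hx
  have hsin : rho x = √(1 - x 2 ^ 2) := by
    rw [← sqrt_sq (rho_nonneg x), eq_sub_of_add_eq (sq_rho_add_sq x), hn, one_pow]
  rw [u16, norm_smul, norm_smul_eThv_add_smul_eRv hρ, Dfun_eq_logProfile α hρ,
    Lfun_eq_artanh α hρ, hn, polarComponent, radialComponent, hsin]
  simp only [inv_one, div_one, norm_one, one_mul]

lemma tendsto_height_nhdsWithin_S3 :
    Tendsto (fun x : V3 => x 2) (𝓝[sphere2 \ {S3}] S3) (𝓝[>] (-1)) := by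
  refine tendsto_nhdsWithin_iff.2 ⟨?_, ?_⟩
  · exact (Continuous.tendsto' (by fun_prop) _ _ (by simp [S3])).mono_left nhdsWithin_le_nhds
  · filter_upwards [self_mem_nhdsWithin] with x ⟨hx, hxS⟩
    have := pow_pos (dist_pos.2 hxS) 2
    rw [sq_dist_S3 hx] at this
    rw [Set.mem_Ioi]
    linarith

theorem tendsto_norm_u16_div_log_dist (α : ℝ) :
    Tendsto (fun x => ‖u16 α x‖ / log (dist x S3)) (𝓝[sphere2 \ {S3}] S3) (𝓝 (-8)) := by
  have h := (tendsto_sqrt_sq_add_sq_div (tendsto_polarComponent_div α)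
    (tendsto_radialComponent_div α) (tendsto_logDistSouth.eventually_lt_atBot 0)).comp
      tendsto_height_nhdsWithin_S3
  have hlim : -√(0 ^ 2 + (-8) ^ 2) = (-8 : ℝ) := by
    rw [zero_pow two_ne_zero, zero_add, sqrt_sq_eq_abs]
    norm_num
  rw [hlim] at h
  refine h.congr' ?_
  filter_upwards [self_mem_nhdsWithin,
    tendsto_height_nhdsWithin_S3.eventually eventually_mem_Ioo_nhdsGT] with x hx hy
  have hn : ‖x‖ = 1 := mem_sphere_zero_iff_norm.1 hx.1
  have hρ : rho x ≠ 0 := by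
    intro h0
    have := sq_rho_add_sq x
    rw [h0, hn] at this
    nlinarith [hy.1, hy.2]
  rw [norm_u16_of_mem_sphere2 α hx.1 hρ, log_dist_S3 hx.1]
  rfl

end SouthPole

/-- the explicit pair `(u16, p16)` solves Navier–Stokes wherever
`θ ∈ (0,π)` and `D(θ) ≠ 0`, and has logarithmic rate `-8` at the south pole. -/
theorem explicit_log_solution (α : ℝ) :
    (∀ x : V3, rho x ≠ 0 → Dfun α x ≠ 0 → NSEq (u16 α) (p16 α) x) ∧
    Tendsto (fun x => ‖u16 α x‖ / Real.log (dist x S3))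
      (𝓝[sphere2 \ {S3}] S3) (𝓝 (-8)) :=
  ⟨fun _ hρ hD => nsEq_u16 hρ hD, tendsto_norm_u16_div_log_dist α⟩
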